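/- Every path from a measurement event to the output of a data flow graph has a tamper-permitting local prefix: let D = C(t,p,φ,e) be the data flow semantics of a Copland phrase, let v be a measurement event of D with v ≠ ⊤(D), and let π be a path of D from v to ⊤(D). Then π has a prefix of length greater than 1 that is local to some place and permits tampering. -/

import Mathlib

namespace Copland

/-- Places are drawn from a countable set. -/
abbrev Place := ℕ
/-- Symbols (measurement/target identifiers) are drawn from a countable set. -/
abbrev Symb := ℕ

/-- Splitting specifications: `+` or `-`. -/
inductive Split where
  | plus
  | minus
deriving DecidableEq, Repr

/-- Copland phrases. -/
inductive Phrase where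
  | meas : Symb → Place → Symb → Phrase          -- measurement  m q s
  | att  : Place → Phrase → Phrase               -- @_q [ t ]
  | copy : Phrase                                 -- _
  | sign : Phrase                                 -- !
  | hash : Phrase                                 -- #
  | lseq : Phrase → Phrase → Phrase               -- t1 → t2
  | bseq : Split → Split → Phrase → Phrase → Phrase  -- t1 d1<d2 t2
  | bpar : Split → Split → Phrase → Phrase → Phrase  -- t1 d1~d2 t2
deriving DecidableEq, Repr

/-- Evidence terms. -/
inductive Evidence where
  | empty : Evidence                                          -- ξ
  | meas : Symb → Place → Symb → Place → List ℕ → Evidence → Evidence  -- m(ms(m,q,s),p,φ,e)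
  | sig  : Evidence → Place → Evidence                        -- [[e]]_p
  | hash : Evidence → Place → Evidence                        -- #{e}_p
  | seqc : Evidence → Evidence → Evidence                     -- e1 ;; e2
  | parc : Evidence → Evidence → Evidence                     -- e1 || e2
deriving DecidableEq, Repr

/-- The effect `d(e)` of a splitting specification on evidence. -/
def splitEv : Split → Evidence → Evidence
  | .plus, e => e
  | .minus, _ => .empty

/-- The Copland evidence semantics `E(t,p,φ,e)`. -/
def eval : Phrase → Place → List ℕ → Evidence → Evidence
  | .meas m q s, p, φ, e => .meas m q s p φ e
  | .copy, _, _, e => e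
  | .sign, p, _, e => .sig e p
  | .hash, p, _, e => .hash e p
  | .att q t, _, φ, e => eval t q (1 :: φ) e
  | .lseq t1 t2, p, φ, e => eval t2 p (2 :: φ) (eval t1 p (1 :: φ) e)
  | .bseq d1 d2 t1 t2, p, φ, e =>
      .seqc (eval t1 p (1 :: φ) (splitEv d1 e)) (eval t2 p (2 :: φ) (splitEv d2 e))
  | .bpar d1 d2 t1 t2, p, φ, e =>
      .parc (eval t1 p (1 :: φ) (splitEv d1 e)) (eval t2 p (2 :: φ) (splitEv d2 e))

/-- Join operators: sequential `<` or parallel `~`. -/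
inductive JoinOp where
  | seqJ
  | parJ
deriving DecidableEq, Repr

/-- Event labels. -/
inductive Label where
  | msp   : Place → Evidence → Label                    -- p : msp(e)
  | cpy   : Place → Evidence → Label                    -- p : cpy(e)
  | sig   : Place → Evidence → Label                    -- p : sig(e)
  | hsh   : Place → Evidence → Label                    -- p : hsh(e)
  | req   : Place → Place → Evidence → Label            -- p : req(q,e)
  | rpy   : Place → Place → Evidence → Label            -- p : rpy(q,e)
  | split : Place → Split → Split → Evidence → Label    -- p : split(d1,d2,e)
  | join  : Place → JoinOp → Evidence → Label           -- p : join(o,e)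
deriving DecidableEq, Repr

/-- The (sending) place `ϱ(v)`: the place before the colon in the label. -/
def Label.place : Label → Place
  | .msp p _ => p
  | .cpy p _ => p
  | .sig p _ => p
  | .hsh p _ => p
  | .req p _ _ => p
  | .rpy p _ _ => p
  | .split p _ _ _ => p
  | .join p _ _ => p

/-- The receiving place `ϱ'(v)`. -/
def Label.recvPlace : Label → Place
  | .req _ q _ => q
  | .rpy _ q _ => q
  | l => l.place

/-- The evidence `ε(v)`: the last argument of the label. -/
def Label.evid : Label → Evidence
  | .msp _ e => e
  | .cpy _ e => e
  | .sig _ e => e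
  | .hsh _ e => e
  | .req _ _ e => e
  | .rpy _ _ e => e
  | .split _ _ _ e => e
  | .join _ _ e => e

/-- A measurement event is one whose label has the form `p : msp(e)`. -/
def Label.IsMeas (l : Label) : Prop := ∃ p e, l = .msp p e

/-- A cross-place communication event is one with `ϱ(v) ≠ ϱ'(v)`. -/
def Label.IsCross (l : Label) : Prop := l.place ≠ l.recvPlace

/-- A data flow graph: events are the naturals `0, …, n-1`, with an input event,
an output event, flow edges, and a labeling. -/
structure DFG where
  n : ℕ
  vin : ℕ
  vout : ℕ
  edges : List (ℕ × ℕ)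
  label : ℕ → Label

namespace DFG

/-- Well-formedness of a data flow graph: events are in range, the flow
relation is acyclic, and there is no edge into the input event nor out of
the output event. -/
def WF (G : DFG) : Prop :=
  G.vin < G.n ∧ G.vout < G.n ∧
  (∀ pr ∈ G.edges, pr.1 < G.n ∧ pr.2 < G.n) ∧
  (∀ v, ¬ Relation.TransGen (fun a b => (a, b) ∈ G.edges) v v) ∧
  (∀ pr ∈ G.edges, pr.2 ≠ G.vin ∧ pr.1 ≠ G.vout)

/-- The single-event data flow graph. -/
def single (l : Label) : DFG :=
  { n := 1, vin := 0, vout := 0, edges := [], label := fun _ => l }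

/-- Before-copy composition: the second graph's events are renumbered after the
first's, and a flow edge links the output of the first to the input of the second. -/
def seqComp (G1 G2 : DFG) : DFG :=
  { n := G1.n + G2.n
    vin := G1.vin
    vout := G1.n + G2.vout
    edges := G1.edges ++ G2.edges.map (fun pr => (G1.n + pr.1, G1.n + pr.2)) ++
      [(G1.vout, G1.n + G2.vin)]
    label := fun i => if i < G1.n then G1.label i else G2.label (i - G1.n) }

/-- Branching composition: a split event, the two subgraphs (with a flow edge from
the split into the input of a subgraph exactly when the corresponding splitting
specification is `+`), and a join event receiving flow from both outputs. -/
def branch (sp jn : Label) (d1 d2 : Split) (G1 G2 : DFG) : DFG :=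
  { n := G1.n + G2.n + 2
    vin := 0
    vout := G1.n + G2.n + 1
    edges :=
      G1.edges.map (fun pr => (pr.1 + 1, pr.2 + 1)) ++
      G2.edges.map (fun pr => (pr.1 + 1 + G1.n, pr.2 + 1 + G1.n)) ++
      (if d1 = Split.plus then [(0, G1.vin + 1)] else []) ++
      (if d2 = Split.plus then [(0, G2.vin + 1 + G1.n)] else []) ++
      [(G1.vout + 1, G1.n + G2.n + 1), (G2.vout + 1 + G1.n, G1.n + G2.n + 1)]
    label := fun i =>
      if i = 0 then sp
      else if i < G1.n + 1 then G1.label (i - 1)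
      else if i < G1.n + G2.n + 1 then G2.label (i - 1 - G1.n)
      else jn }

end DFG

/-- The Copland data flow semantics `C(t,p,φ,e)`. -/
def sem : Phrase → Place → List ℕ → Evidence → DFG
  | .meas m q s, p, φ, e => .single (.msp p (.meas m q s p φ e))
  | .copy, p, _, e => .single (.cpy p e)
  | .sign, p, _, e => .single (.sig p (.sig e p))
  | .hash, p, _, e => .single (.hsh p (.hash e p))
  | .att q t, p, φ, e =>
      (DFG.single (.req p q e)).seqComp
        ((sem t q (1 :: φ) e).seqComp (.single (.rpy q p (eval t q (1 :: φ) e))))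
  | .lseq t1 t2, p, φ, e =>
      (sem t1 p (1 :: φ) e).seqComp (sem t2 p (2 :: φ) (eval t1 p (1 :: φ) e))
  | .bseq d1 d2 t1 t2, p, φ, e =>
      DFG.branch (.split p d1 d2 e)
        (.join p .seqJ (eval (.bseq d1 d2 t1 t2) p φ e)) d1 d2
        (sem t1 p (1 :: φ) (splitEv d1 e)) (sem t2 p (2 :: φ) (splitEv d2 e))
  | .bpar d1 d2 t1 t2, p, φ, e =>
      DFG.branch (.split p d1 d2 e)
        (.join p .parJ (eval (.bpar d1 d2 t1 t2) p φ e)) d1 d2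
        (sem t1 p (1 :: φ) (splitEv d1 e)) (sem t2 p (2 :: φ) (splitEv d2 e))

namespace DFG

/-- A path of a data flow graph: a nonempty sequence of events of the graph
successively related by flow edges. -/
def IsPath (G : DFG) (π : List ℕ) : Prop :=
  π ≠ [] ∧ (∀ v ∈ π, v < G.n) ∧ π.Chain' (fun a b => (a, b) ∈ G.edges)

/-- One step of the tamper set computation. -/
def tsStep (G : DFG) (s : Set Place) (v : ℕ) : Set Place :=
  match G.label v with
  | .sig p _ => {p} ∩ s
  | _ => s

/-- The tamper set `ts(π)` of a path: `ts(⟨v⟩)` is the set of all places if `v` is a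
measurement event and `∅` otherwise; `ts(π § v) = {p} ∩ ts(π)` if `ℓ(v) = p:sig(e)`,
and `ts(π § v) = ts(π)` otherwise. -/
def ts (G : DFG) (π : List ℕ) : Set Place :=
  match π with
  | [] => ∅
  | v :: rest =>
      rest.foldl (tsStep G)
        (match G.label v with
          | .msp _ _ => Set.univ
          | _ => ∅)

/-- A path is `p`-signing iff every signature event on it occurs at `p`. -/
def Signing (G : DFG) (π : List ℕ) (p : Place) : Prop :=
  ∀ v ∈ π, ∀ q e, G.label v = .sig q e → q = p

/-- A path `π = ⟨v, …, v'⟩` permits tampering (at `v'` with the evidence from `v`)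
iff (1) `v` is a measurement event, (2) the length of `π` exceeds 1, and
(3) `π` is `ϱ(v')`-signing or `ϱ'(v')`-signing. -/
def PermitsTamper (G : DFG) (π : List ℕ) : Prop :=
  (∀ v, π.head? = some v → (G.label v).IsMeas) ∧
  1 < π.length ∧
  (∀ v', π.getLast? = some v' →
    G.Signing π (G.label v').place ∨ G.Signing π (G.label v').recvPlace)

/-- A path `⟨v1,…,vn⟩` is local to place `p` iff every interior event has both
sending and receiving place `p`, and each endpoint has sending or receiving place `p`. -/
def LocalTo (G : DFG) (π : List ℕ) (p : Place) : Prop :=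
  (∀ i v, 0 < i → i + 1 < π.length → π[i]? = some v →
      (G.label v).place = p ∧ (G.label v).recvPlace = p) ∧
  (∀ v, π.head? = some v → (G.label v).place = p ∨ (G.label v).recvPlace = p) ∧
  (∀ v, π.getLast? = some v → (G.label v).place = p ∨ (G.label v).recvPlace = p)

/-- `π` is a path of `G` from `v` to `v'`. -/
def PathBetween (G : DFG) (v v' : ℕ) (π : List ℕ) : Prop :=
  G.IsPath π ∧ π.head? = some v ∧ π.getLast? = some v'

/-- A set `S` of events of `G` is a tamper strategy for `v` iff every path from `v`
to the output event of `G` contains an event `v' ∈ S` such that the prefix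
`⟨v, …, v'⟩` of the path permits tampering. -/
def TamperStrategy (G : DFG) (S : Set ℕ) (v : ℕ) : Prop :=
  (∀ w ∈ S, w < G.n) ∧
  ∀ π, G.PathBetween v G.vout π →
    ∃ v' ∈ S, ∃ π', π' <+: π ∧ π'.getLast? = some v' ∧ G.PermitsTamper π'

/-- `S` is a minimal tamper strategy for `v` iff it is a tamper strategy for `v` and
every tamper strategy for `v` included in `S` equals `S`. -/
def MinimalTamperStrategy (G : DFG) (S : Set ℕ) (v : ℕ) : Prop :=
  G.TamperStrategy S v ∧ ∀ S', G.TamperStrategy S' v → S' ⊆ S → S' = S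

/-- A path `π = ⟨v1,…,vn⟩` is protected iff either `v1` is not a measurement event,
or for every `1 < i ≤ n`, if `vi` is a cross-place communication event then
`ts(⟨v1,…,vi⟩) ⊆ {ϱ(vi)}`. -/
def ProtectedPath (G : DFG) (π : List ℕ) : Prop :=
  (∀ v, π.head? = some v → ¬ (G.label v).IsMeas) ∨
  (∀ i v, 0 < i → i < π.length → π[i]? = some v → (G.label v).IsCross →
      G.ts (π.take (i + 1)) ⊆ {(G.label v).place})

/-- A data flow graph is protected iff all of its paths are protected. -/
def Protected (G : DFG) : Prop :=
  ∀ π, G.IsPath π → G.ProtectedPath π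

end DFG

/-- The tamper places function `τ` on evidence. -/
def tau : Evidence → Set Place
  | .empty => ∅
  | .meas _ _ _ _ _ _ => Set.univ
  | .hash e _ => tau e
  | .sig e p => {p} ∩ tau e
  | .seqc e1 e2 => tau e1 ∪ tau e2
  | .parc e1 e2 => tau e1 ∪ tau e2

open scoped Classical in
/-- The Evidence Protection Program `epp(t,p,e)`. -/
noncomputable def epp : Phrase → Place → Evidence → Phrase
  | .meas m q s, _, _ => .meas m q s
  | .copy, _, _ => .copy
  | .sign, _, _ => .sign
  | .hash, _, _ => .hash
  | .lseq t1 t2, p, e =>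
      .lseq (epp t1 p e) (epp t2 p (eval (epp t1 p e) p [] e))
  | .att q t, p, e =>
      if q = p then .att q (epp t p e)
      else if tau e ⊆ {p} then
        if tau (eval (epp t q e) q [] e) ⊆ {q} then
          .att q (epp t q e)
        else
          .att q (.lseq (epp t q e) .sign)
      else
        if tau (eval (epp t q (.sig e p)) q [] (.sig e p)) ⊆ {q} then
          .lseq .sign (.att q (epp t q (.sig e p)))
        else
          .lseq .sign (.att q (.lseq (epp t q (.sig e p)) .sign))
  | .bseq d1 d2 t1 t2, p, e =>
      .bseq d1 d2 (epp t1 p (splitEv d1 e)) (epp t2 p (splitEv d2 e))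
  | .bpar d1 d2 t1 t2, p, e =>
      .bpar d1 d2 (epp t1 p (splitEv d1 e)) (epp t2 p (splitEv d2 e))

end Copland

/-
In a graph of the form `C(t,p,φ,e)`, every flow edge leads to an event located at the receiving
place of its source. Hence the first edge of a path joins two events at a common place. If its
source is a measurement, the only event on this edge that can be a signature is its target `v'`,
which signs at `ϱ(v')`, so these two events already form the required prefix.
-/

namespace Copland

namespace DFG

/-- `v` is an event of `G` with `ϱ(v) = p`. -/
def LocatedAt (G : DFG) (v : ℕ) (p : Place) : Prop :=
  v < G.n ∧ (G.label v).place = p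

/-- `v` is an event of `G` with `ϱ'(v) = p`. -/
def ReceivedAt (G : DFG) (v : ℕ) (p : Place) : Prop :=
  v < G.n ∧ (G.label v).recvPlace = p

/-- Two events of `G` share a place at which the first is received and the second is located:
the compatibility that data flow requires of the ends of an edge. -/
def Handover (G : DFG) (v w : ℕ) : Prop :=
  ∃ p, G.ReceivedAt v p ∧ G.LocatedAt w p

/-- `f` maps events of `G` to events of `H` with the same labels. It serves to transfer the places of
individual events, for which `f` may identify events and ignore flow edges. -/
def LabelHom (G H : DFG) (f : ℕ → ℕ) : Prop :=
  ∀ v < G.n, f v < H.n ∧ H.label (f v) = G.label v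

/-- `G` takes data from place `p` to place `q`: its input event is located at `p`, its output event
is received at `q`, and every flow edge is a handover. -/
structure Coherent (G : DFG) (p q : Place) : Prop where
  locatedAt_vin : G.LocatedAt G.vin p
  receivedAt_vout : G.ReceivedAt G.vout q
  handover : ∀ v w, (v, w) ∈ G.edges → G.Handover v w

theorem Handover.recvPlace_eq_place {G : DFG} {v w : ℕ} (h : G.Handover v w) :
    (G.label v).recvPlace = (G.label w).place := by
  obtain ⟨p, hv, hw⟩ := h
  exact hv.2.trans hw.2.symm

namespace LabelHom

variable {G H : DFG} {f : ℕ → ℕ} {v w : ℕ} {p : Place}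

theorem locatedAt (hf : G.LabelHom H f) (h : G.LocatedAt v p) : H.LocatedAt (f v) p :=
  ⟨(hf v h.1).1, (congrArg Label.place (hf v h.1).2).trans h.2⟩

theorem receivedAt (hf : G.LabelHom H f) (h : G.ReceivedAt v p) : H.ReceivedAt (f v) p :=
  ⟨(hf v h.1).1, (congrArg Label.recvPlace (hf v h.1).2).trans h.2⟩

theorem handover (hf : G.LabelHom H f) (h : G.Handover v w) : H.Handover (f v) (f w) :=
  h.imp fun _ hp => ⟨hf.receivedAt hp.1, hf.locatedAt hp.2⟩

end LabelHom

theorem coherent_single (l : Label) : (single l).Coherent l.place l.recvPlace where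
  locatedAt_vin := ⟨Nat.one_pos, rfl⟩
  receivedAt_vout := ⟨Nat.one_pos, rfl⟩
  handover := by simp [single]

section SeqComp

variable {G₁ G₂ : DFG}

theorem labelHom_seqComp_left : G₁.LabelHom (G₁.seqComp G₂) id :=
  fun _ hv => ⟨Nat.lt_add_right _ hv, if_pos hv⟩

theorem labelHom_seqComp_right : G₂.LabelHom (G₁.seqComp G₂) (G₁.n + ·) :=
  fun _ hv => ⟨Nat.add_lt_add_left hv _, by simp [seqComp]⟩

theorem forall_mem_edges_seqComp_iff {P : ℕ → ℕ → Prop} :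
    (∀ v w, (v, w) ∈ (G₁.seqComp G₂).edges → P v w) ↔
      (∀ v w, (v, w) ∈ G₁.edges → P v w) ∧
      (∀ v w, (v, w) ∈ G₂.edges → P (G₁.n + v) (G₁.n + w)) ∧
      P G₁.vout (G₁.n + G₂.vin) := by
  simp only [seqComp, List.mem_append, List.mem_map, List.mem_singleton, Prod.mk.injEq,
    Prod.exists]
  grind

theorem Coherent.seqComp {p q r : Place} (h₁ : G₁.Coherent p q) (h₂ : G₂.Coherent q r) :
    (G₁.seqComp G₂).Coherent p r :=
  have left : G₁.LabelHom (G₁.seqComp G₂) id := labelHom_seqComp_left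
  have right : G₂.LabelHom (G₁.seqComp G₂) (G₁.n + ·) := labelHom_seqComp_right
  { locatedAt_vin := left.locatedAt h₁.locatedAt_vin
    receivedAt_vout := right.receivedAt h₂.receivedAt_vout
    handover := forall_mem_edges_seqComp_iff.mpr
      ⟨fun v w h => left.handover (h₁.handover v w h),
        fun v w h => right.handover (h₂.handover v w h),
        q, left.receivedAt h₁.receivedAt_vout, right.locatedAt h₂.locatedAt_vin⟩ }

end SeqComp

section Branch

variable {sp jn : Label} {d₁ d₂ : Split} {G₁ G₂ : DFG}

theorem labelHom_branch_left : G₁.LabelHom (branch sp jn d₁ d₂ G₁ G₂) (· + 1) :=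
  fun v hv => ⟨show v + 1 < G₁.n + G₂.n + 2 by omega, by simp [branch, hv]⟩

theorem labelHom_branch_right : G₂.LabelHom (branch sp jn d₁ d₂ G₁ G₂) (· + 1 + G₁.n) := by
  refine fun v hv => ⟨show v + 1 + G₁.n < G₁.n + G₂.n + 2 by omega, ?_⟩
  have not_left : ¬ v + 1 + G₁.n < G₁.n + 1 := by omega
  have before_join : v + 1 + G₁.n < G₁.n + G₂.n + 1 := by omega
  have index : v + 1 + G₁.n - 1 - G₁.n = v := by omega
  simp only [branch, Nat.add_eq_zero_iff, one_ne_zero, and_false, false_and, if_false, not_left,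
    if_pos before_join, index]

theorem branch_label_vout :
    (branch sp jn d₁ d₂ G₁ G₂).label (branch sp jn d₁ d₂ G₁ G₂).vout = jn := by
  simp [branch]

theorem forall_mem_edges_branch_iff {P : ℕ → ℕ → Prop} :
    (∀ v w, (v, w) ∈ (branch sp jn d₁ d₂ G₁ G₂).edges → P v w) ↔
      (∀ v w, (v, w) ∈ G₁.edges → P (v + 1) (w + 1)) ∧
      (∀ v w, (v, w) ∈ G₂.edges → P (v + 1 + G₁.n) (w + 1 + G₁.n)) ∧
      (d₁ = .plus → P 0 (G₁.vin + 1)) ∧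
      (d₂ = .plus → P 0 (G₂.vin + 1 + G₁.n)) ∧
      P (G₁.vout + 1) (G₁.n + G₂.n + 1) ∧
      P (G₂.vout + 1 + G₁.n) (G₁.n + G₂.n + 1) := by
  simp only [branch, List.mem_append, List.mem_map, Prod.exists, Prod.mk.injEq, List.mem_cons,
    List.not_mem_nil, or_false]
  grind

theorem Coherent.branch (h₁ : G₁.Coherent sp.recvPlace jn.place)
    (h₂ : G₂.Coherent sp.recvPlace jn.place) :
    (branch sp jn d₁ d₂ G₁ G₂).Coherent sp.place jn.recvPlace :=
  let G := DFG.branch sp jn d₁ d₂ G₁ G₂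
  have left : G₁.LabelHom G (· + 1) := labelHom_branch_left
  have right : G₂.LabelHom G (· + 1 + G₁.n) := labelHom_branch_right
  have vin_lt : G.vin < G.n := Nat.succ_pos _
  have vout_lt : G.vout < G.n := Nat.lt_succ_self _
  have label_vout : G.label G.vout = jn := branch_label_vout
  have split : G.ReceivedAt G.vin sp.recvPlace := ⟨vin_lt, rfl⟩
  have join : G.LocatedAt G.vout jn.place := ⟨vout_lt, congrArg _ label_vout⟩
  { locatedAt_vin := ⟨vin_lt, rfl⟩
    receivedAt_vout := ⟨vout_lt, congrArg _ label_vout⟩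
    handover := forall_mem_edges_branch_iff.mpr
      ⟨fun v w h => left.handover (h₁.handover v w h),
        fun v w h => right.handover (h₂.handover v w h),
        fun _ => ⟨_, split, left.locatedAt h₁.locatedAt_vin⟩,
        fun _ => ⟨_, split, right.locatedAt h₂.locatedAt_vin⟩,
        ⟨_, left.receivedAt h₁.receivedAt_vout, join⟩,
        ⟨_, right.receivedAt h₂.receivedAt_vout, join⟩⟩ }

end Branch

end DFG

theorem coherent_sem (t : Phrase) (p : Place) (φ : List ℕ) (e : Evidence) :
    (sem t p φ e).Coherent p p := by
  induction t generalizing p φ e with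
  | meas | copy | sign | hash => exact DFG.coherent_single _
  | att q t ih =>
    exact (DFG.coherent_single (.req p q e)).seqComp
      ((ih ..).seqComp (DFG.coherent_single (.rpy q p _)))
  | lseq t₁ t₂ ih₁ ih₂ => exact (ih₁ ..).seqComp (ih₂ ..)
  | bseq d₁ d₂ t₁ t₂ ih₁ ih₂ | bpar d₁ d₂ t₁ t₂ ih₁ ih₂ =>
    exact DFG.Coherent.branch (sp := .split p d₁ d₂ e) (jn := .join p _ _) (ih₁ ..) (ih₂ ..)

namespace DFG

variable {G : DFG} {v w : ℕ} {p : Place} {π : List ℕ}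

theorem PathBetween.exists_eq_cons_cons (hπ : G.PathBetween v w π) (hne : v ≠ w) :
    ∃ u l, π = v :: u :: l ∧ (v, u) ∈ G.edges := by
  obtain ⟨⟨-, -, hchain⟩, hhead, hlast⟩ := hπ
  match π with
  | [] => simp at hhead
  | [_] => exact absurd (Option.some_inj.mp (hhead.symm.trans hlast)) hne
  | a :: u :: l =>
    obtain rfl : a = v := by simpa using hhead
    exact ⟨u, l, rfl, (List.isChain_cons_cons.mp hchain).1⟩

theorem signing_singleton_place (G : DFG) (v : ℕ) : G.Signing [v] (G.label v).place := by
  intro u hu q e hq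
  obtain rfl : u = v := by simpa using hu
  simp [hq, Label.place]

theorem signing_cons_iff_of_isMeas (hv : (G.label v).IsMeas) :
    G.Signing (v :: π) p ↔ G.Signing π p := by
  obtain ⟨q, e, hv⟩ := hv
  simp [Signing, hv]

theorem permitsTamper_pair_iff : G.PermitsTamper [v, w] ↔ (G.label v).IsMeas := by
  refine ⟨fun h => h.1 v rfl, fun hv => ⟨by simpa using hv, by simp, ?_⟩⟩
  intro u hu
  obtain rfl : w = u := by simpa using hu
  exact .inl ((signing_cons_iff_of_isMeas hv).mpr (G.signing_singleton_place w))

theorem localTo_pair_iff :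
    G.LocalTo [v, w] p ↔
      ((G.label v).place = p ∨ (G.label v).recvPlace = p) ∧
      ((G.label w).place = p ∨ (G.label w).recvPlace = p) := by
  have no_interior : ∀ i u, 0 < i → i + 1 < [v, w].length → [v, w][i]? = some u →
      (G.label u).place = p ∧ (G.label u).recvPlace = p := by
    intro i u hi hlt
    simp only [List.length_cons, List.length_nil] at hlt
    omega
  simpa [LocalTo] using fun _ _ => no_interior

end DFG

end Copland

open Copland in
theorem local_tamper_permitting_prefix_general {G : DFG} {v w : ℕ} {π : List ℕ}
    (hG : ∀ a b, (a, b) ∈ G.edges → (G.label a).recvPlace = (G.label b).place)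
    (hm : (G.label v).IsMeas) (hne : v ≠ w) (hπ : G.PathBetween v w π) :
    ∃ π', π' <+: π ∧ 1 < π'.length ∧ (∃ q : Place, G.LocalTo π' q) ∧ G.PermitsTamper π' := by
  obtain ⟨u, l, rfl, hvu⟩ := hπ.exists_eq_cons_cons hne
  have hlocal : G.LocalTo [v, u] (G.label u).place :=
    DFG.localTo_pair_iff.mpr ⟨.inr (hG v u hvu), .inl rfl⟩
  exact ⟨[v, u], ⟨l, rfl⟩, by simp, ⟨_, hlocal⟩, DFG.permitsTamper_pair_iff.mpr hm⟩

open Copland in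
/-- Every path from a measurement event `v ≠ ⊤(D)` to the output of
`D = C(t,p,φ,e)` has a prefix of length greater than one that is local to
some place and permits tampering. -/
theorem local_tamper_permitting_prefix (t : Phrase) (p : Place) (φ : List ℕ)
    (e : Evidence) (v : ℕ) (π : List ℕ)
    (hv : v < (sem t p φ e).n) (hm : ((sem t p φ e).label v).IsMeas)
    (hne : v ≠ (sem t p φ e).vout)
    (hπ : (sem t p φ e).PathBetween v (sem t p φ e).vout π) :
    ∃ π', π' <+: π ∧ 1 < π'.length ∧
      (∃ q : Place, (sem t p φ e).LocalTo π' q) ∧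
      (sem t p φ e).PermitsTamper π' := by
  exact local_tamper_permitting_prefix_general
    (fun a b hab => ((coherent_sem t p φ e).handover a b hab).recvPlace_eq_place) hm hne hπ
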